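/- Let α > 1, β ≥ 1, and let (V_n)_{n ≥ 0} be a sequence of nonnegative real numbers satisfying V_n ≤ β^n V_{n−1}^α for every n ≥ 1. Then for every n ≥ 0, V_n ≤ ( β^{α/(α−1)²} V₀ )^{α^n}. In particular, if V₀ < β^{−α/(α−1)²}, then V_n → 0 as n → ∞. -/

import Mathlib

open Real Filter

/-- The recursion `V (n + 1) ≤ β ^ (n + 1) * V n ^ α` becomes homogeneous after weighting `V n`
by `β ^ (n / (α - 1) + α / (α - 1) ^ 2)`. -/
theorem rpow_mul_le_rpow_pow_of_recursion {α β : ℝ} (hα : 1 < α) (hβ : 0 < β)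
    {V : ℕ → ℝ} (hV : ∀ n, 0 ≤ V n)
    (hrec : ∀ n : ℕ, V (n + 1) ≤ β ^ (n + 1) * V n ^ α) (n : ℕ) :
    β ^ (n / (α - 1) + α / (α - 1) ^ 2) * V n ≤
      (β ^ (α / (α - 1) ^ 2) * V 0) ^ (α ^ n) := by
  have hα' : α - 1 ≠ 0 := by linarith
  induction n with
  | zero => simp
  | succ n ih =>
    have hexp : ((n + 1 : ℕ) : ℝ) / (α - 1) + α / (α - 1) ^ 2 + ((n + 1 : ℕ) : ℝ) =
        (n / (α - 1) + α / (α - 1) ^ 2) * α := by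
      push_cast
      field_simp
      ring
    have hbase : 0 ≤ β ^ (α / (α - 1) ^ 2) * V 0 := mul_nonneg (by positivity) (hV 0)
    calc β ^ (((n + 1 : ℕ) : ℝ) / (α - 1) + α / (α - 1) ^ 2) * V (n + 1)
        ≤ β ^ (((n + 1 : ℕ) : ℝ) / (α - 1) + α / (α - 1) ^ 2) * (β ^ (n + 1) * V n ^ α) := by
          gcongr
          exact hrec n
      _ = (β ^ (n / (α - 1) + α / (α - 1) ^ 2) * V n) ^ α := by
          rw [mul_rpow (by positivity) (hV n), ← rpow_mul hβ.le, ← hexp,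
            rpow_add_natCast hβ.ne', mul_assoc]
      _ ≤ ((β ^ (α / (α - 1) ^ 2) * V 0) ^ (α ^ n)) ^ α :=
          rpow_le_rpow (mul_nonneg (by positivity) (hV n)) ih (by linarith)
      _ = (β ^ (α / (α - 1) ^ 2) * V 0) ^ (α ^ (n + 1)) := by
          rw [← rpow_mul hbase, pow_succ α n]

/-- the abstract De Giorgi iteration lemma. -/
theorem de_giorgi_iteration (α β : ℝ) (hα : 1 < α) (hβ : 1 ≤ β)
    (V : ℕ → ℝ) (hV : ∀ n, 0 ≤ V n)
    (hrec : ∀ n : ℕ, 1 ≤ n → V n ≤ β ^ n * V (n - 1) ^ α) :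
    (∀ n : ℕ, V n ≤ (β ^ (α / (α - 1) ^ 2) * V 0) ^ ((α ^ n : ℝ))) ∧
      (V 0 < β ^ (-(α / (α - 1) ^ 2)) → Tendsto V atTop (nhds 0)) := by
  have hβ0 : 0 < β := by linarith
  have hα1 : 0 < α - 1 := by linarith
  have hbound : ∀ n : ℕ, V n ≤ (β ^ (α / (α - 1) ^ 2) * V 0) ^ ((α ^ n : ℝ)) := fun n =>
    (le_mul_of_one_le_left (hV n) (one_le_rpow hβ (by positivity))).trans
      (rpow_mul_le_rpow_pow_of_recursion hα hβ0 hV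
        (fun k => by simpa using hrec (k + 1) (by omega)) n)
  refine ⟨hbound, fun h0 => ?_⟩
  have hbase : 0 ≤ β ^ (α / (α - 1) ^ 2) * V 0 := mul_nonneg (by positivity) (hV 0)
  have hlt : β ^ (α / (α - 1) ^ 2) * V 0 < 1 := by
    rwa [rpow_neg hβ0.le, ← one_div, lt_div_iff₀' (by positivity)] at h0
  exact squeeze_zero hV hbound
    ((tendsto_rpow_atTop_of_base_lt_one _ (by linarith) hlt).comp
      (tendsto_pow_atTop_atTop_of_one_lt hα))
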